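/- (At Most Two Outsiders) In the robot model on a line, assume the visibility graph at time 0 is connected. Then there exists a time t₀ such that for all t ≥ t₀: any two robots strictly to the left of 0 occupy the same position (for all i, j, if x t i < 0 and x t j < 0 then x t i = x t j), and any two robots strictly to the right of D occupy the same position (if x t i > D and x t j > D then x t i = x t j). In other words, after a finite number of steps at most one position is occupied on each side of the segment [0,D]. -/

import Mathlib

open Filter Topology

/-- Position of the farthest left robot visible from robot `i` at time `t`
(visibility radius `V`). -/
noncomputable def lpos {n : ℕ} (V : ℝ) (x : ℕ → Fin (n + 1) → ℝ)
    (t : ℕ) (i : Fin (n + 1)) : ℝ :=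
  sInf (x t '' {j | |x t j - x t i| ≤ V})

/-- Position of the farthest right robot visible from robot `i` at time `t`
(visibility radius `V`). -/
noncomputable def rpos {n : ℕ} (V : ℝ) (x : ℕ → Fin (n + 1) → ℝ)
    (t : ℕ) (i : Fin (n + 1)) : ℝ :=
  sSup (x t '' {j | |x t j - x t i| ≤ V})

/-!
While some robot lies strictly to the left of every faulty robot, the leftmost robot never changes
(updates preserve order) and never moves left, so it converges to some `m`. Mutual visibility is
never lost, since both robots move to within `V / 2` of their current midpoint. Hence a non-faulty
robot tending to `m` drags along everyone it has ever seen: its next position is at least the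
average of the leftmost position and that of the robot it sees.

If `m` is strictly to the left of the faulty robots, connectivity spreads this convergence to all
robots; otherwise every robot left of the faulty ones eventually sees the leftmost one. Either way
the outsiders all tend to `m`. Once all the robots tending to `m` are within `V / 2` of it, the
non-faulty ones among them see exactly the same robots, and so move to the same point. The other
side follows by reflection.
-/

section

variable {ι : Type*} {V : ℝ} {y : ι → ℝ} {i j : ι}

/-- Adjacency in the visibility graph of the configuration `y`: the robots `i` and `j` are within
the visibility radius `V` of each other. -/
def Visible (V : ℝ) (y : ι → ℝ) (i j : ι) : Prop :=
  |y i - y j| ≤ V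

/-- The smallest position visible from robot `i` in the configuration `y`; this is `lpos` for an
arbitrary type of robots. -/
noncomputable def leftmost (V : ℝ) (y : ι → ℝ) (i : ι) : ℝ :=
  sInf (y '' {j | Visible V y j i})

/-- The largest position visible from robot `i` in the configuration `y`; this is `rpos` for an
arbitrary type of robots. -/
noncomputable def rightmost (V : ℝ) (y : ι → ℝ) (i : ι) : ℝ :=
  sSup (y '' {j | Visible V y j i})

/-- The point to which a non-faulty robot `i` moves: the midpoint of the extreme positions it
sees. -/
noncomputable def midrange (V : ℝ) (y : ι → ℝ) (i : ι) : ℝ :=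
  (leftmost V y i + rightmost V y i) / 2

lemma visible_self (hV : 0 ≤ V) (y : ι → ℝ) (i : ι) : Visible V y i i := by
  simpa [Visible] using hV

lemma visible_comm : Visible V y i j ↔ Visible V y j i := by
  rw [Visible, Visible, abs_sub_comm]

lemma visible_iff : Visible V y i j ↔ y j - V ≤ y i ∧ y i ≤ y j + V := by
  rw [Visible, abs_sub_le_iff]
  constructor <;> rintro ⟨h₁, h₂⟩ <;> constructor <;> linarith

lemma Visible.radius_nonneg (h : Visible V y i j) : 0 ≤ V :=
  (abs_nonneg _).trans h

lemma visible_neg : Visible V (-y) = Visible V y := by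
  funext i j
  rw [Visible, Visible, Pi.neg_apply, Pi.neg_apply, neg_sub_neg, abs_sub_comm]

lemma leftmost_le (h : Visible V y j i) : leftmost V y i ≤ y j := by
  refine csInf_le ⟨y i - V, ?_⟩ (Set.mem_image_of_mem y h)
  rintro _ ⟨k, hk, rfl⟩
  exact (visible_iff.1 hk).1

lemma le_leftmost (hV : 0 ≤ V) {c : ℝ} (h : ∀ j, Visible V y j i → c ≤ y j) :
    c ≤ leftmost V y i :=
  le_csInf ⟨y i, i, visible_self hV y i, rfl⟩ (Set.forall_mem_image.2 h)

lemma leftmost_neg (V : ℝ) (y : ι → ℝ) (i : ι) : leftmost V (-y) i = -rightmost V y i := by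
  rw [leftmost, rightmost, ← Real.sInf_neg, ← Set.image_neg_eq_neg, Set.image_image, visible_neg]
  rfl

lemma rightmost_neg (V : ℝ) (y : ι → ℝ) (i : ι) : rightmost V (-y) i = -leftmost V y i := by
  rw [← neg_neg (rightmost V (-y) i), ← leftmost_neg, neg_neg]

lemma midrange_neg (V : ℝ) (y : ι → ℝ) (i : ι) : midrange V (-y) i = -midrange V y i := by
  rw [midrange, midrange, leftmost_neg, rightmost_neg]
  ring

lemma le_rightmost (h : Visible V y j i) : y j ≤ rightmost V y i := by
  rw [← neg_le_neg_iff, ← leftmost_neg]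
  exact leftmost_le (visible_neg.symm ▸ h)

lemma leftmost_mono (hV : 0 ≤ V) (hij : y i ≤ y j) : leftmost V y i ≤ leftmost V y j := by
  refine le_leftmost hV fun k hk => ?_
  rcases le_total (y k) (y i) with hki | hik
  · have hjk := (visible_iff.1 hk).1
    exact leftmost_le (visible_iff.2 ⟨by linarith, by linarith⟩)
  · exact (leftmost_le (visible_self hV y i)).trans hik

lemma rightmost_mono (hV : 0 ≤ V) (hij : y i ≤ y j) : rightmost V y i ≤ rightmost V y j := by
  rw [← neg_le_neg_iff, ← leftmost_neg, ← leftmost_neg]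
  exact leftmost_mono hV (neg_le_neg hij)

lemma midrange_mono (hV : 0 ≤ V) (hij : y i ≤ y j) : midrange V y i ≤ midrange V y j :=
  div_le_div_of_nonneg_right (add_le_add (leftmost_mono hV hij) (rightmost_mono hV hij))
    zero_le_two

lemma average_le_midrange {c : ℝ} (hc : ∀ k, Visible V y k i → c ≤ y k) (h : Visible V y j i) :
    (c + y j) / 2 ≤ midrange V y i :=
  div_le_div_of_nonneg_right (add_le_add (le_leftmost h.radius_nonneg hc) (le_rightmost h))
    zero_le_two

lemma sub_half_radius_le_midrange (h : Visible V y j i) :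
    (y i + y j) / 2 - V / 2 ≤ midrange V y i := by
  have := average_le_midrange (fun k hk => (visible_iff.1 hk).1) h
  linarith

lemma abs_midrange_sub_midpoint_le (h : Visible V y j i) :
    |midrange V y i - (y i + y j) / 2| ≤ V / 2 := by
  have hlow := sub_half_radius_le_midrange h
  have hup := sub_half_radius_le_midrange (y := -y) (visible_neg ▸ h)
  rw [midrange_neg, Pi.neg_apply, Pi.neg_apply] at hup
  rw [abs_sub_le_iff]
  constructor <;> linarith

lemma midrange_congr (h : ∀ k, Visible V y k i ↔ Visible V y k j) :
    midrange V y i = midrange V y j := by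
  simp only [midrange, leftmost, rightmost, h]

/-- An execution of the robot model with visibility radius `V` and an arbitrary set `F` of faulty
robots: those in `F` never move, the others synchronously move to their midrange. -/
structure IsExecution (V : ℝ) (F : Set ι) (x : ℕ → ι → ℝ) : Prop where
  stationary : ∀ t, ∀ i ∈ F, x t i = x 0 i
  update : ∀ t, ∀ i ∉ F, x (t + 1) i = midrange V (x t) i

namespace IsExecution

variable {F : Set ι} {x : ℕ → ι → ℝ} {a m : ℝ} {ℓ : ℕ → ℝ} {s t : ℕ}

lemma neg (hx : IsExecution V F x) : IsExecution V F (-x) where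
  stationary t i hi := congrArg Neg.neg (hx.stationary t i hi)
  update t i hi := (congrArg Neg.neg (hx.update t i hi)).trans (midrange_neg V (x t) i).symm

lemma succ_eq_self_or_midrange (hx : IsExecution V F x) (t : ℕ) (i : ι) :
    x (t + 1) i = x t i ∨ x (t + 1) i = midrange V (x t) i := by
  by_cases hi : i ∈ F
  · exact .inl ((hx.stationary _ i hi).trans (hx.stationary t i hi).symm)
  · exact .inr (hx.update t i hi)

lemma abs_succ_sub_midpoint_le (hx : IsExecution V F x) (h : Visible V (x t) j i) :
    |x (t + 1) i - (x t i + x t j) / 2| ≤ V / 2 := by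
  rcases hx.succ_eq_self_or_midrange t i with heq | heq <;> rw [heq]
  · obtain ⟨h₁, h₂⟩ := visible_iff.1 h
    rw [abs_sub_le_iff]
    constructor <;> linarith
  · exact abs_midrange_sub_midpoint_le h

lemma visible_succ (hx : IsExecution V F x) (h : Visible V (x t) i j) :
    Visible V (x (t + 1)) i j := by
  have hi := hx.abs_succ_sub_midpoint_le (visible_comm.1 h)
  have hj := hx.abs_succ_sub_midpoint_le h
  rw [add_comm (x t j), abs_sub_comm] at hj
  have := abs_sub_le (x (t + 1) i) ((x t i + x t j) / 2) (x (t + 1) j)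
  rw [Visible]
  linarith

lemma visible_of_le (hx : IsExecution V F x) (hst : s ≤ t) (h : Visible V (x s) i j) :
    Visible V (x t) i j :=
  Nat.le_induction h (fun _ _ => hx.visible_succ) t hst

lemma le_succ (hx : IsExecution V F x) (hV : 0 ≤ V) {c : ℝ} (hc : ∀ i, c ≤ x t i) (i : ι) :
    c ≤ x (t + 1) i := by
  rcases hx.succ_eq_self_or_midrange t i with heq | heq <;> rw [heq]
  · exact hc i
  · have := average_le_midrange (fun k _ => hc k) (visible_self hV (x t) i)
    linarith [hc i]

lemma notMem_of_lt (hx : IsExecution V F x) (ha : ∀ i ∈ F, a ≤ x 0 i) (hi : x t i < a) :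
    i ∉ F := fun hiF =>
  hi.not_ge ((ha i hiF).trans_eq (hx.stationary t i hiF).symm)

lemma lt_and_forall_le_succ (hx : IsExecution V F x) (hV : 0 ≤ V)
    (ha : ∀ i ∈ F, a ≤ x 0 i) (hout : ∃ k, x (t + 1) k < a) (hia : x t i < a)
    (hmin : ∀ j, x t i ≤ x t j) : x (t + 1) i < a ∧ ∀ j, x (t + 1) i ≤ x (t + 1) j := by
  have hnonfaulty : ∀ j ∉ F, x (t + 1) i ≤ x (t + 1) j := fun j hj => by
    rw [hx.update t i (hx.notMem_of_lt ha hia), hx.update t j hj]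
    exact midrange_mono hV (hmin j)
  obtain ⟨k, hk⟩ := hout
  have hlt : x (t + 1) i < a := (hnonfaulty k (hx.notMem_of_lt ha hk)).trans_lt hk
  refine ⟨hlt, fun j => ?_⟩
  by_contra! hji
  exact hji.not_ge (hnonfaulty j (hx.notMem_of_lt ha (hji.trans hlt)))

lemma exists_forall_lt_and_forall_le [Finite ι] (hx : IsExecution V F x) (hV : 0 ≤ V)
    (ha : ∀ i ∈ F, a ≤ x 0 i) (hout : ∀ t, ∃ i, x t i < a) :
    ∃ i₀, ∀ t, x t i₀ < a ∧ ∀ j, x t i₀ ≤ x t j := by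
  obtain ⟨k, hk⟩ := hout 0
  have : Nonempty ι := ⟨k⟩
  obtain ⟨i₀, hi₀⟩ := Finite.exists_min (x 0)
  refine ⟨i₀, fun t => ?_⟩
  induction t with
  | zero => exact ⟨(hi₀ k).trans_lt hk, hi₀⟩
  | succ t ih => exact hx.lt_and_forall_le_succ hV ha (hout (t + 1)) ih.1 ih.2

lemma exists_tendsto_of_forall_le (hx : IsExecution V F x) (hV : 0 ≤ V)
    (hlt : ∀ t, x t i < a) (hmin : ∀ t j, x t i ≤ x t j) :
    ∃ m ≤ a, Tendsto (x · i) atTop (𝓝 m) := by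
  have hmono : Monotone (x · i) := monotone_nat_of_le_succ fun t => hx.le_succ hV (hmin t) i
  have hlim := tendsto_atTop_ciSup hmono ⟨a, Set.forall_mem_range.2 fun t => (hlt t).le⟩
  exact ⟨_, le_of_tendsto' hlim fun t => (hlt t).le, hlim⟩

lemma tendsto_of_visible (hx : IsExecution V F x) (hℓ : Tendsto ℓ atTop (𝓝 m))
    (hle : ∀ t j, ℓ t ≤ x t j) (hiF : i ∉ F) (hi : Tendsto (x · i) atTop (𝓝 m))
    (hij : Visible V (x s) i j) : Tendsto (x · j) atTop (𝓝 m) := by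
  have hupper : Tendsto (fun t => 2 * x (t + 1) i - ℓ t) atTop (𝓝 m) := by
    simpa [two_mul] using (((tendsto_add_atTop_iff_nat 1).2 hi).const_mul 2).sub hℓ
  refine tendsto_of_tendsto_of_tendsto_of_le_of_le' hℓ hupper (.of_forall (hle · j)) ?_
  filter_upwards [eventually_ge_atTop s] with t hst
  have := average_le_midrange (fun k _ => hle t k) (visible_comm.1 (hx.visible_of_le hst hij))
  rw [hx.update t i hiF]
  linarith

lemma tendsto_of_connected (hx : IsExecution V F x)
    (hconn : ∀ i j, Relation.ReflTransGen (Visible V (x 0)) i j) (ha : ∀ i ∈ F, a ≤ x 0 i)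
    (hℓ : Tendsto ℓ atTop (𝓝 m)) (hle : ∀ t j, ℓ t ≤ x t j) (hma : m < a)
    (hi : Tendsto (x · i) atTop (𝓝 m)) (j : ι) : Tendsto (x · j) atTop (𝓝 m) := by
  induction hconn i j with
  | refl => exact hi
  | tail _ hkj hk =>
    obtain ⟨t, ht⟩ := (hk.eventually_lt_const hma).exists
    exact hx.tendsto_of_visible hℓ hle (hx.notMem_of_lt ha ht) hk hkj

lemma eventually_tendsto_of_lt (hx : IsExecution V F x) (hV : 0 < V)
    (hconn : ∀ i j, Relation.ReflTransGen (Visible V (x 0)) i j) (ha : ∀ i ∈ F, a ≤ x 0 i)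
    (hlt : ∀ t, x t i < a) (hmin : ∀ t j, x t i ≤ x t j) (hma : m ≤ a)
    (hi : Tendsto (x · i) atTop (𝓝 m)) :
    ∀ᶠ t in atTop, ∀ j, x t j < a → Tendsto (x · j) atTop (𝓝 m) := by
  rcases hma.lt_or_eq with hma | rfl
  · exact .of_forall fun _ j _ => hx.tendsto_of_connected hconn ha hi hmin hma hi j
  · filter_upwards [hi.eventually_const_le (sub_lt_self m hV)] with t ht j hj
    have hvis : Visible V (x t) i j :=
      visible_iff.2 ⟨by linarith, by linarith [hmin t j]⟩
    exact hx.tendsto_of_visible hi hmin (hx.notMem_of_lt ha (hlt t)) hi hvis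

lemma eventually_succ_eq_of_tendsto [Finite ι] (hx : IsExecution V F x) (hV : 0 < V)
    (hℓ : Tendsto ℓ atTop (𝓝 m)) (hle : ∀ t j, ℓ t ≤ x t j) :
    ∀ᶠ t in atTop, ∀ i ∉ F, ∀ j ∉ F, Tendsto (x · i) atTop (𝓝 m) →
      Tendsto (x · j) atTop (𝓝 m) → x (t + 1) i = x (t + 1) j := by
  have hclose : ∀ᶠ t in atTop, ∀ i, Tendsto (x · i) atTop (𝓝 m) → |x t i - m| < V / 2 :=
    eventually_all.2 fun i => eventually_imp_distrib_left.2 fun hi =>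
      Metric.tendsto_nhds.1 hi _ (half_pos hV)
  filter_upwards [hclose] with t ht i hiF j hjF hi hj
  have hvis : ∀ i ∉ F, Tendsto (x · i) atTop (𝓝 m) →
      ∀ k, Visible V (x t) k i ↔ Tendsto (x · k) atTop (𝓝 m) := fun i hiF hi k => by
    refine ⟨fun h => hx.tendsto_of_visible hℓ hle hiF hi (visible_comm.1 h), fun hk => ?_⟩
    have := abs_sub_le (x t k) m (x t i)
    rw [Visible]
    linarith [ht i hi, ht k hk, abs_sub_comm m (x t i)]
  rw [hx.update t i hiF, hx.update t j hjF]
  exact midrange_congr fun k => (hvis i hiF hi k).trans (hvis j hjF hj k).symm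

lemma eventually_eq_of_lt [Finite ι] (hx : IsExecution V F x) (hV : 0 < V)
    (hconn : ∀ i j, Relation.ReflTransGen (Visible V (x 0)) i j) (ha : ∀ i ∈ F, a ≤ x 0 i) :
    ∀ᶠ t in atTop, ∀ i j, x t i < a → x t j < a → x t i = x t j := by
  by_cases hout : ∀ t, ∃ i, x t i < a
  · obtain ⟨i₀, hi₀⟩ := hx.exists_forall_lt_and_forall_le hV.le ha hout
    have hlt t := (hi₀ t).1
    have hmin t := (hi₀ t).2
    obtain ⟨m, hma, hm⟩ := hx.exists_tendsto_of_forall_le hV.le hlt hmin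
    have hmerge := hx.eventually_succ_eq_of_tendsto hV hm hmin
    have hlim := hx.eventually_tendsto_of_lt hV hconn ha hlt hmin hma hm
    rw [← map_add_atTop_eq_nat 1, eventually_map]
    filter_upwards [hmerge, (tendsto_add_atTop_nat 1).eventually hlim] with t hmerge hlim i j hi hj
    exact hmerge i (hx.notMem_of_lt ha hi) j (hx.notMem_of_lt ha hj) (hlim i hi) (hlim j hj)
  · push Not at hout
    obtain ⟨T, hT⟩ := hout
    filter_upwards [eventually_ge_atTop T] with t ht i _ hi
    have hle : ∀ i, a ≤ x t i := Nat.le_induction hT (fun _ _ => hx.le_succ hV.le) t ht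
    exact absurd hi (hle i).not_gt

end IsExecution

theorem at_most_two_outsiders_general [Finite ι] {F : Set ι} {x : ℕ → ι → ℝ} {a b : ℝ}
    (hx : IsExecution V F x) (hV : 0 < V)
    (hconn : ∀ i j, Relation.ReflTransGen (Visible V (x 0)) i j)
    (ha : ∀ i ∈ F, a ≤ x 0 i) (hb : ∀ i ∈ F, x 0 i ≤ b) :
    ∀ᶠ t in atTop,
      (∀ i j, x t i < a → x t j < a → x t i = x t j) ∧
      (∀ i j, b < x t i → b < x t j → x t i = x t j) := by
  have hconn_neg : ∀ i j, Relation.ReflTransGen (Visible V ((-x) 0)) i j := by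
    simpa only [Pi.neg_apply, visible_neg] using hconn
  filter_upwards [hx.eventually_eq_of_lt hV hconn ha,
    hx.neg.eventually_eq_of_lt hV hconn_neg fun i hi => neg_le_neg (hb i hi)] with t hleft hright
  exact ⟨hleft, fun i j hi hj => neg_injective (hright i j (neg_lt_neg hi) (neg_lt_neg hj))⟩

end

/-- (At Most Two Outsiders) After a finite number of steps, at most one
position is occupied on each side of the segment `[0, D]`. -/
theorem at_most_two_outsiders
    (n : ℕ) (hn : 2 ≤ n) (V D : ℝ) (hV : 0 < V) (hD : 0 < D)
    (x : ℕ → Fin (n + 1) → ℝ)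
    (hfault0 : ∀ t : ℕ, x t 0 = 0)
    (hfaultn : ∀ t : ℕ, x t (Fin.last n) = D)
    (hupd : ∀ t : ℕ, ∀ i : Fin (n + 1), i ≠ 0 → i ≠ Fin.last n →
      x (t + 1) i = (lpos V x t i + rpos V x t i) / 2)
    (hconn : ∀ i j : Fin (n + 1),
      Relation.ReflTransGen (fun a b : Fin (n + 1) => |x 0 a - x 0 b| ≤ V) i j)
    : ∃ t₀ : ℕ, ∀ t : ℕ, t₀ ≤ t →
      (∀ i j : Fin (n + 1), x t i < 0 → x t j < 0 → x t i = x t j) ∧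
      (∀ i j : Fin (n + 1), x t i > D → x t j > D → x t i = x t j) := by
  have hx : IsExecution V {0, Fin.last n} x :=
    ⟨by simp [hfault0, hfaultn], fun t i hi => hupd t i (hi <| .inl ·) (hi <| .inr ·)⟩
  exact eventually_atTop.1 <| at_most_two_outsiders_general hx hV hconn
    (by simp [hfault0, hfaultn, hD.le]) (by simp [hfault0, hfaultn, hD.le])
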